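/- Let X be a Tychonoff space and let λ, μ ∈ Ψ with μ ⊆ λ. If the bitopological space (C(X), τ_μ, τ_λ) has countable (τ_λ, τ_μ)-T-tightness, then for each uncountable regular cardinal κ and each increasing κ-indexed sequence (𝒰_α : α < κ) of families of cozero subsets of X such that ⋃_{α<κ} 𝒰_α is a λ-f-cover of X, there exists β < κ such that 𝒰_β is a μ-f-cover of X. -/

import Mathlib

open Set Filter Topology TopologicalSpace ContinuousMap

/-- A subset `A` of `X` is *C-compact* if `f '' A` is compact in `ℝ` for every
continuous real-valued function `f` on `X`. -/
def IsCCompact {X : Type*} [TopologicalSpace X] (A : Set X) : Prop :=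
  ∀ f : C(X, ℝ), IsCompact (f '' A)

/-- The `λ`-open (set-open) topology on `C(X, ℝ)`, generated by the subbasic sets
`[F, U] = {f : f '' F ⊆ U}` for `F ∈ lam` and `U ⊆ ℝ` open. -/
def setOpenTopology {X : Type*} [TopologicalSpace X] (lam : Set (Set X)) :
    TopologicalSpace C(X, ℝ) :=
  TopologicalSpace.generateFrom
    {S | ∃ F ∈ lam, ∃ U : Set ℝ, IsOpen U ∧ S = {f : C(X, ℝ) | f '' F ⊆ U}}

/-- Membership in the collection `Ψ`: a family of nonempty closed C-compact subsets of `X`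
forming a π-network, hereditary with respect to (closed) C-compact subsets of its elements,
and maximal among families of nonempty sets inducing the same set-open topology. -/
structure MemPsi {X : Type*} [TopologicalSpace X] (lam : Set (Set X)) : Prop where
  nonempty : ∀ A ∈ lam, A.Nonempty
  closed : ∀ A ∈ lam, IsClosed A
  ccompact : ∀ A ∈ lam, IsCCompact A
  piNetwork : ∀ U : Set X, IsOpen U → U.Nonempty → ∃ A ∈ lam, A ⊆ U
  hereditary : ∀ A ∈ lam, ∀ B : Set X, B ⊆ A → B.Nonempty → IsClosed B → IsCCompact B →
    B ∈ lam
  maximal : ∀ lam' : Set (Set X), (∀ A ∈ lam', A.Nonempty) →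
    setOpenTopology lam' = setOpenTopology lam → lam' ⊆ lam

/-- A cozero (functional open) subset of `X`: the complement of a zero-set. -/
def IsCozero {X : Type*} [TopologicalSpace X] (U : Set X) : Prop :=
  ∃ f : C(X, ℝ), U = {x | f x ≠ 0}

/-- `𝒰` is a `λ`-f-cover: a family of cozero sets, not containing `X`, such that every
member of `lam` is contained in some member of `𝒰`. -/
def IsFCover {X : Type*} [TopologicalSpace X] (lam : Set (Set X)) (𝒰 : Set (Set X)) : Prop :=
  (Set.univ : Set X) ∉ 𝒰 ∧ (∀ U ∈ 𝒰, IsCozero U) ∧ ∀ A ∈ lam, ∃ U ∈ 𝒰, A ⊆ U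

/-- `Λ(λ)`: the collection of all `λ`-f-covers of `X`. -/
def fCovers {X : Type*} [TopologicalSpace X] (lam : Set (Set X)) : Set (Set (Set X)) :=
  {𝒰 | IsFCover lam 𝒰}

/-- The selection principle `S₁(𝒜, ℬ)`. -/
def S1 {α : Type*} (𝒜 ℬ : Set (Set α)) : Prop :=
  ∀ A : ℕ → Set α, (∀ n, A n ∈ 𝒜) →
    ∃ b : ℕ → α, (∀ n, b n ∈ A n) ∧ Set.range b ∈ ℬ

/-- The selection principle `S_fin(𝒜, ℬ)`. -/
def Sfin {α : Type*} (𝒜 ℬ : Set (Set α)) : Prop :=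
  ∀ A : ℕ → Set α, (∀ n, A n ∈ 𝒜) →
    ∃ B : ℕ → Set α, (∀ n, (B n).Finite ∧ B n ⊆ A n) ∧ (⋃ n, B n) ∈ ℬ

/-- `Ω_y` with respect to the topology `t`: sets having `y` in their closure but not
containing `y`. -/
def OmegaPt {Y : Type*} (t : TopologicalSpace Y) (y : Y) : Set (Set Y) :=
  {A | y ∈ @closure Y t A ∧ y ∉ A}

/-- Countable `(t₁, t₂)`-tightness of a bitopological space. -/
def CountableBiTightness {Y : Type*} (t1 t2 : TopologicalSpace Y) : Prop :=
  ∀ A : Set Y, ∀ f ∈ @closure Y t1 A, ∃ B ⊆ A, B.Countable ∧ f ∈ @closure Y t2 B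

/-- `X` is `λ`-`μ`-Lindelöf: every `λ`-f-cover has a countable subfamily which is a
`μ`-f-cover. -/
def LamMuLindelof {X : Type*} [TopologicalSpace X] (lam mu : Set (Set X)) : Prop :=
  ∀ 𝒰 : Set (Set X), IsFCover lam 𝒰 → ∃ 𝒱 ⊆ 𝒰, 𝒱.Countable ∧ IsFCover mu 𝒱

/-- Countable `(t₁, t₂)`-T-tightness: for every uncountable regular cardinal `κ` and every
increasing `κ`-indexed sequence of `t₁`-closed sets, the union is `t₂`-closed. -/
def CountableBiTTightness {Y : Type*} (t1 t2 : TopologicalSpace Y) : Prop :=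
  ∀ κ : Cardinal.{0}, Cardinal.aleph0 < κ → κ.IsRegular →
    ∀ A : κ.ord.ToType → Set Y, Monotone A → (∀ α, @IsClosed Y t1 (A α)) →
      @IsClosed Y t2 (⋃ α, A α)

/-- `X` is separably `λ`-submetrizable: there is a continuous map of `X` onto a separable
metric space which is one-to-one on `⋃ lam`. -/
def SeparablyLamSubmetrizable (X : Type*) [TopologicalSpace X] (lam : Set (Set X)) : Prop :=
  ∃ (Y : Type) (m : MetricSpace Y),
    @SeparableSpace Y m.toPseudoMetricSpace.toUniformSpace.toTopologicalSpace ∧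
    ∃ f : X → Y,
      @Continuous X Y _ m.toPseudoMetricSpace.toUniformSpace.toTopologicalSpace f ∧
      Function.Surjective f ∧ Set.InjOn f (⋃₀ lam)

/-- `R`-separability for a pair of topologies: from every sequence of `t₁`-dense sets one
can pick single points forming a `t₂`-dense set. -/
def RSepBi {Y : Type*} (t1 t2 : TopologicalSpace Y) : Prop :=
  ∀ D : ℕ → Set Y, (∀ n, @Dense Y t1 (D n)) →
    ∃ d : ℕ → Y, (∀ n, d n ∈ D n) ∧ @Dense Y t2 (Set.range d)

/-- `M`-separability for a pair of topologies. -/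
def MSepBi {Y : Type*} (t1 t2 : TopologicalSpace Y) : Prop :=
  ∀ D : ℕ → Set Y, (∀ n, @Dense Y t1 (D n)) →
    ∃ F : ℕ → Set Y, (∀ n, (F n).Finite ∧ F n ⊆ D n) ∧ @Dense Y t2 (⋃ n, F n)

/-- `H`-separability for a pair of topologies. -/
def HSepBi {Y : Type*} (t1 t2 : TopologicalSpace Y) : Prop :=
  ∀ D : ℕ → Set Y, (∀ n, @Dense Y t1 (D n)) →
    ∃ F : ℕ → Set Y, (∀ n, (F n).Finite ∧ F n ⊆ D n) ∧
      ∀ G : Set Y, @IsOpen Y t2 G → G.Nonempty →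
        ∀ᶠ n in Filter.atTop, (G ∩ F n).Nonempty

/-- A countable set `D` is groupable with respect to the topology `t`. -/
def GroupableIn {Y : Type*} (t : TopologicalSpace Y) (D : Set Y) : Prop :=
  ∃ A : ℕ → Set Y, (∀ n, (A n).Finite) ∧ D = ⋃ n, A n ∧
    ∀ G : Set Y, @IsOpen Y t G → G.Nonempty →
      ∀ᶠ n in Filter.atTop, (G ∩ A n).Nonempty

/-- `GN`-separability for a pair of topologies. -/
def GNSepBi {Y : Type*} (t1 t2 : TopologicalSpace Y) : Prop :=
  ∀ D : ℕ → Set Y, (∀ n, @Dense Y t1 (D n)) →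
    ∃ d : ℕ → Y, (∀ n, d n ∈ D n) ∧ @Dense Y t2 (Set.range d) ∧
      GroupableIn t2 (Set.range d)

/-- The `(t₁, t₂)`-Pytkeev property for a bitopological space. -/
def PytkeevBi {Y : Type*} (t1 t2 : TopologicalSpace Y) : Prop :=
  ∀ A : Set Y, ∀ g ∈ @closure Y t1 A, g ∉ A →
    ∃ B : ℕ → Set Y, (∀ n, (B n).Infinite ∧ B n ⊆ A) ∧
      ∀ G ∈ @nhds Y t2 g, ∃ n, B n ⊆ G

/-- A groupable `μ`-f-cover. -/
def GroupableFCover {X : Type*} [TopologicalSpace X] (mu 𝒱 : Set (Set X)) : Prop :=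
  𝒱.Countable ∧ IsFCover mu 𝒱 ∧
    ∃ G : ℕ → Set (Set X), (∀ m, (G m).Finite) ∧
      (Pairwise fun m k => Disjoint (G m) (G k)) ∧ 𝒱 = ⋃ m, G m ∧
      ∀ F ∈ mu, ∀ᶠ m in Filter.atTop, ∃ U ∈ G m, F ⊆ U

/-!
For a family `𝒱` of cozero sets let `B(𝒱)` be the set of functions that are `1` outside some member
of `𝒱`. By maximality, `μ ∈ Ψ` is closed under binary unions, so every `τ_μ`-neighbourhood of `0`
contains all functions vanishing on a single member of `μ`. If `𝒱` covers the members of `μ`, then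
`0` is in the `τ_μ`-closure of `B(𝒱)`, because a function can separate a C-compact set from the
complement of a cozero set containing it. Conversely, if `0` is in the `τ_λ`-closure of `B(𝒱)`, then
`𝒱` covers every `A ∈ λ`: a function of `B(𝒱)` lying in `[A, (-∞, 1)]` is not `1` anywhere on `A`.
T-tightness makes `⋃ α, cl_λ B(𝒰 α)` closed in `τ_μ`, so it contains `0` as soon as `⋃ α, 𝒰 α`
covers the members of `μ`, and then some `𝒰 β` covers the members of `λ`.
-/

theorem CountableBiTTightness.closure_iUnion_subset {Y : Type*} {t1 t2 : TopologicalSpace Y}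
    (h : CountableBiTTightness t1 t2) {κ : Cardinal.{0}} (hκ : Cardinal.aleph0 < κ)
    (hreg : κ.IsRegular) {A : κ.ord.ToType → Set Y} (hA : Monotone A) :
    closure[t2] (⋃ α, A α) ⊆ ⋃ α, closure[t1] (A α) := by
  have hclosed : IsClosed[t2] (⋃ α, closure[t1] (A α)) :=
    h κ hκ hreg _ (fun _ _ hαβ => @closure_mono _ t1 _ _ (hA hαβ)) fun _ => @isClosed_closure _ t1 _
  exact @closure_minimal _ t2 _ _ (iUnion_mono fun _ => @subset_closure _ t1 _) hclosed

section SetOpenTopology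

variable {X : Type*} [TopologicalSpace X] {lam mu : Set (Set X)}

theorem isOpen_setOf_image_subset {F : Set X} (hF : F ∈ lam) {U : Set ℝ} (hU : IsOpen U) :
    IsOpen[setOpenTopology lam] {f : C(X, ℝ) | f '' F ⊆ U} :=
  isOpen_generateFrom_of_mem ⟨F, hF, U, hU, rfl⟩

theorem setOpenTopology_anti (h : mu ⊆ lam) : setOpenTopology lam ≤ setOpenTopology mu :=
  generateFrom_anti fun _ ⟨F, hF, hS⟩ => ⟨F, h hF, hS⟩

theorem setOpenTopology_insert_union {A B : Set X} (hA : A ∈ lam) (hB : B ∈ lam) :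
    setOpenTopology (insert (A ∪ B) lam) = setOpenTopology lam := by
  refine le_antisymm (setOpenTopology_anti (subset_insert _ _)) (le_generateFrom ?_)
  rintro _ ⟨F, rfl | hF, U, hU, rfl⟩
  · simp only [image_union, union_subset_iff]
    exact @IsOpen.inter _ (setOpenTopology lam) _ _
      (isOpen_setOf_image_subset hA hU) (isOpen_setOf_image_subset hB hU)
  · exact isOpen_setOf_image_subset hF hU

theorem exists_forall_eqOn_mem_of_isOpen (hne : lam.Nonempty) (hdir : DirectedOn (· ⊆ ·) lam)
    {W : Set C(X, ℝ)} (hW : IsOpen[setOpenTopology lam] W) {g : C(X, ℝ)} (hg : g ∈ W) :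
    ∃ F ∈ lam, ∀ f : C(X, ℝ), EqOn f g F → f ∈ W := by
  change GenerateOpen _ W at hW
  induction hW with
  | basic _ hS =>
    obtain ⟨F, hF, U, -, rfl⟩ := hS
    exact ⟨F, hF, fun f hf => hf.image_eq.trans_subset hg⟩
  | univ => exact hne.imp fun F hF => ⟨hF, fun _ _ => mem_univ _⟩
  | inter S T _ _ ihS ihT =>
    obtain ⟨F, hF, hFS⟩ := ihS hg.1
    obtain ⟨G, hG, hGT⟩ := ihT hg.2
    obtain ⟨H, hH, hFH, hGH⟩ := hdir F hF G hG
    exact ⟨H, hH, fun f hf => ⟨hFS f (hf.mono hFH), hGT f (hf.mono hGH)⟩⟩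
  | sUnion 𝒮 _ ih =>
    obtain ⟨S, hS, hgS⟩ := hg
    obtain ⟨F, hF, hFS⟩ := ih S hS hgS
    exact ⟨F, hF, fun f hf => ⟨S, hS, hFS f hf⟩⟩

namespace MemPsi

theorem union_mem (hlam : MemPsi lam) {A B : Set X} (hA : A ∈ lam) (hB : B ∈ lam) :
    A ∪ B ∈ lam := by
  refine hlam.maximal _ ?_ (setOpenTopology_insert_union hA hB) (mem_insert _ _)
  rintro C (rfl | hC)
  · exact (hlam.nonempty A hA).mono subset_union_left
  · exact hlam.nonempty C hC

theorem directedOn (hlam : MemPsi lam) : DirectedOn (· ⊆ ·) lam := fun A hA B hB =>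
  ⟨A ∪ B, hlam.union_mem hA hB, subset_union_left, subset_union_right⟩

theorem family_nonempty [Nonempty X] (hlam : MemPsi lam) : lam.Nonempty :=
  (hlam.piNetwork univ isOpen_univ univ_nonempty).imp fun _ => And.left

end MemPsi

theorem IsFCover.anti {𝒱 : Set (Set X)} (h𝒱 : IsFCover lam 𝒱) (h : mu ⊆ lam) : IsFCover mu 𝒱 :=
  ⟨h𝒱.1, h𝒱.2.1, fun A hA => h𝒱.2.2 A (h hA)⟩

theorem IsCCompact.exists_eqOn_zero_eqOn_one_compl {A U : Set X} (hA : IsCCompact A)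
    (hU : IsCozero U) (hAU : A ⊆ U) : ∃ f : C(X, ℝ), EqOn f 0 A ∧ EqOn f 1 Uᶜ := by
  obtain ⟨g, rfl⟩ := hU
  have hdisj : Disjoint (g '' A) {0} := by
    rw [disjoint_singleton_right]
    rintro ⟨x, hx, hgx⟩
    exact hAU hx hgx
  obtain ⟨φ, hφ0, hφ1, -⟩ :=
    exists_continuous_zero_one_of_isClosed (hA g).isClosed isClosed_singleton hdisj
  exact ⟨φ.comp g, fun x hx => hφ0 (mem_image_of_mem g hx), fun x hx => hφ1 (not_not.mp hx)⟩

/-- The continuous functions that are constantly `1` outside some member of `𝒱`. Whether `0` lies in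
the closure of this set for a set-open topology records which sets the members of `𝒱` cover. -/
def eqOneOutside (𝒱 : Set (Set X)) : Set C(X, ℝ) :=
  {f | ∃ U ∈ 𝒱, EqOn f 1 Uᶜ}

theorem eqOneOutside_mono : Monotone (eqOneOutside (X := X)) :=
  fun _ _ h _ ⟨U, hU, hf⟩ => ⟨U, h hU, hf⟩

theorem eqOneOutside_iUnion {ι : Sort*} (𝒰 : ι → Set (Set X)) :
    eqOneOutside (⋃ i, 𝒰 i) = ⋃ i, eqOneOutside (𝒰 i) := by
  ext f
  simp only [eqOneOutside, mem_ofPred_eq, mem_iUnion]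
  tauto

theorem zero_mem_closure_eqOneOutside (hne : lam.Nonempty) (hdir : DirectedOn (· ⊆ ·) lam)
    (hcc : ∀ A ∈ lam, IsCCompact A) {𝒱 : Set (Set X)} (hcoz : ∀ U ∈ 𝒱, IsCozero U)
    (hcov : ∀ A ∈ lam, ∃ U ∈ 𝒱, A ⊆ U) :
    0 ∈ closure[setOpenTopology lam] (eqOneOutside 𝒱) := by
  refine (@mem_closure_iff _ (setOpenTopology lam) _ _).mpr fun W hW h0W => ?_
  obtain ⟨F, hF, hFW⟩ := exists_forall_eqOn_mem_of_isOpen hne hdir hW h0W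
  obtain ⟨U, hU, hFU⟩ := hcov F hF
  obtain ⟨f, hf0, hf1⟩ := (hcc F hF).exists_eqOn_zero_eqOn_one_compl (hcoz U hU) hFU
  exact ⟨f, hFW f hf0, U, hU, hf1⟩

theorem exists_subset_of_zero_mem_closure_eqOneOutside {𝒱 : Set (Set X)}
    (h0 : 0 ∈ closure[setOpenTopology lam] (eqOneOutside 𝒱)) {A : Set X} (hA : A ∈ lam) :
    ∃ U ∈ 𝒱, A ⊆ U := by
  have h0A : (0 : C(X, ℝ)) ∈ {f : C(X, ℝ) | f '' A ⊆ Iio 1} := by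
    rintro _ ⟨x, -, rfl⟩
    exact zero_lt_one (α := ℝ)
  obtain ⟨f, hfA, U, hU, hf⟩ := (@mem_closure_iff _ (setOpenTopology lam) _ _).mp h0 _
    (isOpen_setOf_image_subset hA isOpen_Iio) h0A
  refine ⟨U, hU, fun x hx => ?_⟩
  by_contra hxU
  exact (hfA (mem_image_of_mem f hx)).ne (hf hxU)

end SetOpenTopology

theorem tTightness_implies_fCover_selection_general
    {X : Type*} [TopologicalSpace X] {lam mu : Set (Set X)}
    (hne : lam.Nonempty → mu.Nonempty) (hdir : DirectedOn (· ⊆ ·) mu)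
    (hcc : ∀ A ∈ mu, IsCCompact A)
    (h : CountableBiTTightness (setOpenTopology lam) (setOpenTopology mu))
    {κ : Cardinal.{0}} (hκ : Cardinal.aleph0 < κ) (hreg : κ.IsRegular)
    {𝒰 : κ.ord.ToType → Set (Set X)} (hmono : Monotone 𝒰) (hcov : IsFCover mu (⋃ α, 𝒰 α)) :
    ∃ β, IsFCover lam (𝒰 β) := by
  suffices hβ : ∃ β, ∀ A ∈ lam, ∃ U ∈ 𝒰 β, A ⊆ U from hβ.imp fun β hβ =>
    ⟨fun hX => hcov.1 (mem_iUnion_of_mem β hX),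
      fun U hU => hcov.2.1 U (mem_iUnion_of_mem β hU), hβ⟩
  rcases lam.eq_empty_or_nonempty with rfl | hlam
  · have : Nonempty κ.ord.ToType := by
      rw [← Cardinal.mk_ne_zero_iff, Cardinal.mk_ord_toType]
      exact hreg.pos.ne'
    exact ⟨Classical.arbitrary _, fun A hA => hA.elim⟩
  have h0 : 0 ∈ closure[setOpenTopology mu] (⋃ α, eqOneOutside (𝒰 α)) :=
    eqOneOutside_iUnion 𝒰 ▸
      zero_mem_closure_eqOneOutside (hne hlam) hdir hcc hcov.2.1 hcov.2.2
  obtain ⟨β, hβ⟩ := mem_iUnion.mp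
    (h.closure_iUnion_subset hκ hreg (eqOneOutside_mono.comp hmono) h0)
  exact ⟨β, fun A hA => exists_subset_of_zero_mem_closure_eqOneOutside hβ hA⟩

/-- For a Tychonoff space `X` and `λ, μ ∈ Ψ` with `μ ⊆ λ`: if the bitopological
space `(C(X), τ_μ, τ_λ)` has countable `(τ_λ, τ_μ)`-T-tightness, then for each uncountable
regular cardinal `κ` and each increasing `κ`-indexed sequence `(𝒰_α : α < κ)` of families of
cozero subsets of `X` whose union is a `λ`-f-cover of `X`, some `𝒰_β` is a `μ`-f-cover of `X`. -/
theorem tTightness_implies_fCover_selection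
    {X : Type*} [TopologicalSpace X] [T35Space X]
    (lam mu : Set (Set X)) (hlam : MemPsi lam) (hmu : MemPsi mu) (hsub : mu ⊆ lam)
    (h : CountableBiTTightness (setOpenTopology lam) (setOpenTopology mu)) :
    ∀ κ : Cardinal.{0}, Cardinal.aleph0 < κ → κ.IsRegular →
      ∀ 𝒰 : κ.ord.ToType → Set (Set X), Monotone 𝒰 →
        (∀ α, ∀ V ∈ 𝒰 α, IsCozero V) →
        IsFCover lam (⋃ α, 𝒰 α) →
        ∃ β, IsFCover mu (𝒰 β) := by
  intro κ hκ hreg 𝒰 hmono _ hcov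
  have hne : lam.Nonempty → mu.Nonempty := fun ⟨A, hA⟩ =>
    have : Nonempty X := (hlam.nonempty A hA).to_type
    hmu.family_nonempty
  obtain ⟨β, hβ⟩ := tTightness_implies_fCover_selection_general hne hmu.directedOn hmu.ccompact
    h hκ hreg hmono (hcov.anti hsub)
  exact ⟨β, hβ.anti hsub⟩
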